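/- Let f_i and f_j be self-usage utility functions with f_i'(x) > f_j'(x) for all x ∈ [0,1). Let p ≥ 0 and let B : [0,1] → ℝ be a nonnegative nondecreasing marginal bonus, and for each owner k ∈ {i, j} define the utility U_k(σ) = f_k(1−σ) + p·σ + ∫₀^σ B(u) du for σ ∈ [0,1]. If s_i maximizes U_i over [0,1], then every maximizer s_j of U_j over [0,1] satisfies s_j ≥ s_i; in particular, if owner i participates in the loyalty program by sharing strictly more than his no-bonus level s_{i,0} (defined by f_i'(1−s_{i,0}) = p), then owner j shares at least s_i > s_{i,0}. -/

import Mathlib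

/-- A self-usage utility function `f` with derivative `f'`:
differentiable on `[0,1]`, strictly increasing on `[0,1]`,
strictly concave on `[0,1]` (with `f'` strictly decreasing), and `f' 1 = 0`. -/
def SelfUsage (f f' : ℝ → ℝ) : Prop :=
  (∀ x ∈ Set.Icc (0:ℝ) 1, HasDerivWithinAt f (f' x) (Set.Icc (0:ℝ) 1) x) ∧
  StrictMonoOn f (Set.Icc (0:ℝ) 1) ∧
  StrictConcaveOn ℝ (Set.Icc (0:ℝ) 1) f ∧
  StrictAntiOn f' (Set.Icc (0:ℝ) 1) ∧
  f' 1 = 0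

/-!
The payment to an owner depends only on the amount shared, so it cancels from the difference of the
two utilities, leaving `fi (1 - σ) - fj (1 - σ)`. The order of the derivatives makes this strictly
decreasing in `σ`. If `sj < si`, then moving both owners from their own optimum to the other's
would therefore raise the sum of their utilities.
-/

theorem le_of_isMaxOn_of_strictAntiOn_sub {α β : Type*} [LinearOrder α] [AddCommGroup β]
    [PartialOrder β] [IsOrderedAddMonoid β] {u v : α → β} {s : Set α} {x y : α}
    (huv : StrictAntiOn (fun a => u a - v a) s) (hx : x ∈ s) (hy : y ∈ s)
    (hu : IsMaxOn u s x) (hv : IsMaxOn v s y) : x ≤ y := by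
  by_contra! hyx
  exact (huv hy hx hyx).not_ge (sub_le_sub (hu hy) (hv hx))

theorem strictMonoOn_sub_of_hasDerivWithinAt_lt {D : Set ℝ} (hD : Convex ℝ D)
    {f f' g g' : ℝ → ℝ} (hf : ContinuousOn f D) (hg : ContinuousOn g D)
    (hf' : ∀ x ∈ interior D, HasDerivWithinAt f (f' x) (interior D) x)
    (hg' : ∀ x ∈ interior D, HasDerivWithinAt g (g' x) (interior D) x)
    (hlt : ∀ x ∈ interior D, g' x < f' x) : StrictMonoOn (fun x => f x - g x) D :=
  strictMonoOn_of_hasDerivWithinAt_pos hD (hf.sub hg)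
    (fun x hx => (hf' x hx).sub (hg' x hx)) (fun x hx => sub_pos.mpr (hlt x hx))

theorem lower_marginal_owner_shares_more_general {fi fi' fj fj' : ℝ → ℝ}
    (hfi : ∀ x ∈ Set.Icc (0 : ℝ) 1, HasDerivWithinAt fi (fi' x) (Set.Icc 0 1) x)
    (hfj : ∀ x ∈ Set.Icc (0 : ℝ) 1, HasDerivWithinAt fj (fj' x) (Set.Icc 0 1) x)
    (horder : ∀ x ∈ Set.Ioo (0 : ℝ) 1, fj' x < fi' x) (payment : ℝ → ℝ)
    {si sj : ℝ} (hsi : si ∈ Set.Icc (0 : ℝ) 1) (hsj : sj ∈ Set.Icc (0 : ℝ) 1)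
    (hsimax : IsMaxOn (fun σ => fi (1 - σ) + payment σ) (Set.Icc 0 1) si)
    (hsjmax : IsMaxOn (fun σ => fj (1 - σ) + payment σ) (Set.Icc 0 1) sj) :
    si ≤ sj := by
  have hmono : StrictMonoOn (fun x => fi x - fj x) (Set.Icc 0 1) :=
    strictMonoOn_sub_of_hasDerivWithinAt_lt (convex_Icc 0 1)
      (fun x hx => (hfi x hx).continuousWithinAt) (fun x hx => (hfj x hx).continuousWithinAt)
      (fun x hx => (hfi x (interior_subset hx)).mono interior_subset)
      (fun x hx => (hfj x (interior_subset hx)).mono interior_subset)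
      (by rwa [interior_Icc])
  have hanti : StrictAntiOn
      (fun σ => (fi (1 - σ) + payment σ) - (fj (1 - σ) + payment σ)) (Set.Icc 0 1) := by
    simp only [add_sub_add_right_eq_sub]
    exact hmono.comp_strictAntiOn (fun _ _ _ _ h => sub_lt_sub_left h 1)
      (fun _ => Set.Icc.mem_iff_one_sub_mem.mp)
  exact le_of_isMaxOn_of_strictAntiOn_sub hanti hsi hsj hsimax hsjmax

/-- under a nonnegative nondecreasing marginal bonus, if owner i
(with larger marginal self-usage utility) maximizes at sᵢ, then every maximizer
of owner j's utility is at least sᵢ. -/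
theorem lower_marginal_owner_shares_more
    (fi fi' fj fj' : ℝ → ℝ) (hfi : SelfUsage fi fi') (hfj : SelfUsage fj fj')
    (horder : ∀ x ∈ Set.Ico (0:ℝ) 1, fj' x < fi' x)
    (p : ℝ) (hp : 0 ≤ p)
    (B : ℝ → ℝ) (hBnn : ∀ u, 0 ≤ B u) (hBmono : MonotoneOn B (Set.Icc (0:ℝ) 1))
    (si : ℝ) (hsi : si ∈ Set.Icc (0:ℝ) 1)
    (hsimax : ∀ σ ∈ Set.Icc (0:ℝ) 1,
      fi (1 - σ) + p * σ + ∫ u in (0:ℝ)..σ, B u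
        ≤ fi (1 - si) + p * si + ∫ u in (0:ℝ)..si, B u)
    (sj : ℝ) (hsj : sj ∈ Set.Icc (0:ℝ) 1)
    (hsjmax : ∀ σ ∈ Set.Icc (0:ℝ) 1,
      fj (1 - σ) + p * σ + ∫ u in (0:ℝ)..σ, B u
        ≤ fj (1 - sj) + p * sj + ∫ u in (0:ℝ)..sj, B u) :
    si ≤ sj := by
  simp only [add_assoc] at hsimax hsjmax
  exact lower_marginal_owner_shares_more_general hfi.1 hfj.1
    (fun x hx => horder x (Set.Ioo_subset_Ico_self hx))
    (fun σ => p * σ + ∫ u in (0 : ℝ)..σ, B u) hsi hsj hsimax hsjmax
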